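/- Let n ≥ 4 and let L be a Cartan type Lie superalgebra over ℂ, i.e. one of W(n), S(n), S̃(n) (n even), or H(n) (n > 4), with its ℤ-grading. Then L is irreducible: L_{−1} is an irreducible L_0-module under the adjoint action, i.e. the only subspaces of L_{−1} invariant under [L_0, ·] are 0 and L_{−1}. -/

import Mathlib

open scoped BigOperators

noncomputable section

namespace CartanSuper

/-- Coordinates of the exterior algebra `Λ(n)` with respect to the monomial basis
`{x_S : S ⊆ {1,…,n}}`. -/
abbrev Lambda (n : ℕ) := Finset (Fin n) → ℂ

/-- Endomorphism algebra of `Λ(n)`. -/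
abbrev E (n : ℕ) := Module.End ℂ (Lambda n)

variable (n : ℕ)

/-- `(−1)^k`. -/
def msign (k : ℕ) : ℂ := (-1 : ℂ) ^ k

/-- The basis monomial `x_S = x_{i₁}⋯x_{i_k}` (indices in increasing order). -/
def mono (S : Finset (Fin n)) : Lambda n := fun T => if T = S then 1 else 0

/-- Number of inversions between `S` and `T`. -/
def inversions (S T : Finset (Fin n)) : ℕ := ((S ×ˢ T).filter fun p => p.2 < p.1).card

/-- The multiplication of `Λ(n)` in coordinates:
`x_S · x_T = (−1)^{inversions} x_{S ∪ T}` for disjoint `S, T` and `0` otherwise. -/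
def lmulFun (f g : Lambda n) : Lambda n :=
  fun U => ∑ S ∈ U.powerset, msign (inversions n S (U \ S)) * f S * g (U \ S)

/-- Left multiplication by an element of `Λ(n)`, as a linear map `Λ(n) →ₗ End Λ(n)`. -/
def mulOp : Lambda n →ₗ[ℂ] E n where
  toFun f :=
    { toFun := lmulFun n f
      map_add' := by
        intro g h; funext U
        simp [lmulFun, mul_add, Finset.sum_add_distrib]
      map_smul' := by
        intro c g; funext U
        simp only [lmulFun, Pi.smul_apply, smul_eq_mul, RingHom.id_apply, Finset.mul_sum]
        exact Finset.sum_congr rfl (by intros; ring) }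
  map_add' := by
    intro f g; apply LinearMap.ext; intro h; funext U
    show lmulFun n (f + g) h U = lmulFun n f h U + lmulFun n g h U
    simp only [lmulFun]
    rw [← Finset.sum_add_distrib]
    exact Finset.sum_congr rfl (by intros; simp [Pi.add_apply]; ring)
  map_smul' := by
    intro c f; apply LinearMap.ext; intro h; funext U
    show lmulFun n (c • f) h U = (c • lmulFun n f h) U
    simp only [lmulFun, Pi.smul_apply, smul_eq_mul, Finset.mul_sum]
    exact Finset.sum_congr rfl (by intros; ring)

/-- The superderivation `∂_i` of `Λ(n)`, in coordinates. -/
def pd (i : Fin n) : E n where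
  toFun f := fun S =>
    if i ∈ S then 0 else msign (S.filter (· < i)).card * f (insert i S)
  map_add' := by
    intro f g; funext S; by_cases h : i ∈ S <;> simp [h, mul_add]
  map_smul' := by
    intro c f; funext S; by_cases h : i ∈ S <;> simp [h] <;> ring

/-- The parity operator `σ` of `Λ(n)`: `σ(x_S) = (−1)^{|S|} x_S`. -/
def par : E n where
  toFun f := fun S => msign S.card * f S
  map_add' := by intro f g; funext S; simp [mul_add]
  map_smul' := by intro c f; funext S; simp; ring

/-- The super-commutator `[D,F] = D∘F − (−1)^{|D||F|} F∘D`, extended bilinearly to all of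
`End Λ(n)` using the parity operator `σ`
(for homogeneous `D`, `σ∘D∘σ = (−1)^{|D|} D`). -/
def sbFun (D F : E n) : E n :=
  D * F - (2:ℂ)⁻¹ • ((F + par n * F * par n) * D + (F - par n * F * par n) * (par n * D * par n))

/-- The super-commutator as a bilinear map. -/
def sbL : E n →ₗ[ℂ] E n →ₗ[ℂ] E n :=
  LinearMap.mk₂ ℂ (sbFun n)
    (fun D D' F => by
      simp only [sbFun, add_mul, sub_mul, mul_add, mul_sub, smul_mul_assoc, mul_smul_comm,
        smul_add, smul_sub]
      module)
    (fun c D F => by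
      simp only [sbFun, add_mul, sub_mul, mul_add, mul_sub, smul_mul_assoc, mul_smul_comm,
        smul_add, smul_sub]
      module)
    (fun D F F' => by
      simp only [sbFun, add_mul, sub_mul, mul_add, mul_sub, smul_mul_assoc, mul_smul_comm,
        smul_add, smul_sub]
      module)
    (fun c D F => by
      simp only [sbFun, add_mul, sub_mul, mul_add, mul_sub, smul_mul_assoc, mul_smul_comm,
        smul_add, smul_sub]
      module)

/-- Shorthand for the super-commutator. -/
def sb (D F : E n) : E n := sbL n D F

/-- The ℤ₂-homogeneous component of `Λ(n)` of parity `p`. -/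
def lpar (p : ZMod 2) : Submodule ℂ (Lambda n) where
  carrier := {f | ∀ S : Finset (Fin n), (S.card : ZMod 2) ≠ p → f S = 0}
  add_mem' := by intro f g hf hg S hS; simp [Pi.add_apply, hf S hS, hg S hS]
  zero_mem' := by intro S hS; rfl
  smul_mem' := by intro c f hf S hS; simp [Pi.smul_apply, hf S hS]

/-- The ℤ-homogeneous component of `Λ(n)` of degree `m` (zero unless `0 ≤ m ≤ n`). -/
def ldeg (m : ℤ) : Submodule ℂ (Lambda n) where
  carrier := {f | ∀ S : Finset (Fin n), (S.card : ℤ) ≠ m → f S = 0}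
  add_mem' := by intro f g hf hg S hS; simp [Pi.add_apply, hf S hS, hg S hS]
  zero_mem' := by intro S hS; rfl
  smul_mem' := by intro c f hf S hS; simp [Pi.smul_apply, hf S hS]

/-- Endomorphisms of `Λ(n)` that are ℤ₂-homogeneous of parity `p`. -/
def epar (p : ZMod 2) : Submodule ℂ (E n) where
  carrier := {D | ∀ (q : ZMod 2), ∀ f ∈ lpar n q, D f ∈ lpar n (q + p)}
  add_mem' := by
    intro D F hD hF q f hf
    simpa [LinearMap.add_apply] using (lpar n (q + p)).add_mem (hD q f hf) (hF q f hf)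
  zero_mem' := by intro q f hf; simpa using (lpar n (q + p)).zero_mem
  smul_mem' := by
    intro c D hD q f hf
    simpa [LinearMap.smul_apply] using (lpar n (q + p)).smul_mem c (hD q f hf)

/-- Endomorphisms of `Λ(n)` that are ℤ-homogeneous of degree `d`. -/
def edeg (d : ℤ) : Submodule ℂ (E n) where
  carrier := {D | ∀ (m : ℤ), ∀ f ∈ ldeg n m, D f ∈ ldeg n (m + d)}
  add_mem' := by
    intro D F hD hF m f hf
    simpa [LinearMap.add_apply] using (ldeg n (m + d)).add_mem (hD m f hf) (hF m f hf)
  zero_mem' := by intro m f hf; simpa using (ldeg n (m + d)).zero_mem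
  smul_mem' := by
    intro c D hD m f hf
    simpa [LinearMap.smul_apply] using (ldeg n (m + d)).smul_mem c (hD m f hf)

/-- The linear map `(f₁,…,f_n) ↦ ∑ᵢ fᵢ ∂ᵢ`. -/
def Wmap : (Fin n → Lambda n) →ₗ[ℂ] E n where
  toFun F := ∑ i, mulOp n (F i) * pd n i
  map_add' := by
    intro F G
    simp only [Pi.add_apply, map_add, add_mul, Finset.sum_add_distrib]
  map_smul' := by
    intro c F
    simp only [RingHom.id_apply, Pi.smul_apply, map_smul, smul_mul_assoc, Finset.smul_sum]

/-- The divergence `(f₁,…,f_n) ↦ ∑ᵢ ∂ᵢ(fᵢ)`. -/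
def divMap : (Fin n → Lambda n) →ₗ[ℂ] Lambda n where
  toFun F := ∑ i, pd n i (F i)
  map_add' := by
    intro F G
    simp only [Pi.add_apply, map_add, Finset.sum_add_distrib]
  map_smul' := by
    intro c F
    simp only [RingHom.id_apply, Pi.smul_apply, map_smul, Finset.smul_sum]

/-- The Witt type Lie superalgebra `W(n) = {∑ fᵢ∂ᵢ : fᵢ ∈ Λ(n)}`. -/
def Wn : Submodule ℂ (E n) := LinearMap.range (Wmap n)

/-- Divergence-free coefficient tuples. -/
def divFree : Submodule ℂ (Fin n → Lambda n) := LinearMap.ker (divMap n)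

/-- The special type Lie superalgebra `S(n) = {∑ fᵢ∂ᵢ : ∑ ∂ᵢ(fᵢ) = 0}`. -/
def Sn : Submodule ℂ (E n) := (divFree n).map (Wmap n)

/-- The top monomial `ω = x₁x₂⋯x_n`. -/
def omegaTop : Lambda n := mono n Finset.univ

/-- `1 − x₁x₂⋯x_n`. -/
def oneM : Lambda n := mono n ∅ - omegaTop n

/-- Multiplication of every coefficient by `1 − x₁⋯x_n`. -/
def oneMScale : (Fin n → Lambda n) →ₗ[ℂ] (Fin n → Lambda n) :=
  LinearMap.pi fun i => (mulOp n (oneM n)) ∘ₗ LinearMap.proj i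

/-- The Lie superalgebra `S̃(n) = {(1−x₁⋯x_n)∑ fᵢ∂ᵢ : ∑ ∂ᵢ(fᵢ) = 0}` (`n` even). -/
def Stn : Submodule ℂ (E n) := (divFree n).map (Wmap n ∘ₗ oneMScale n)

/-- The conjugate index `i'`. -/
def cidx (i : Fin n) : Fin n :=
  ⟨if i.val < n / 2 then i.val + n / 2 else if i.val < 2 * (n / 2) then i.val - n / 2 else i.val,
   by have := i.isLt; split_ifs <;> omega⟩

/-- The linear map `f ↦ D_H(f) = (−1)^{|f|} ∑ᵢ ∂ᵢ(f)∂_{i'}` (the sign is implemented by the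
parity operator `σ`, so that this is a single linear map agreeing with `D_H` on homogeneous
elements). -/
def DHmap : Lambda n →ₗ[ℂ] E n where
  toFun f := ∑ i, mulOp n (pd n i (par n f)) * pd n (cidx n i)
  map_add' := by
    intro f g
    simp only [map_add, add_mul, Finset.sum_add_distrib]
  map_smul' := by
    intro c f
    simp only [RingHom.id_apply, map_smul, smul_mul_assoc, Finset.smul_sum]

/-- Evaluation of the top coefficient. -/
def evalTop : Lambda n →ₗ[ℂ] ℂ := LinearMap.proj Finset.univ

/-- The Hamiltonian Lie superalgebra `H(n) = {D_H(f) : f ∈ ⊕_{i=0}^{n−1} Λ(n)_i}`. -/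
def Hn : Submodule ℂ (E n) := (LinearMap.ker (evalTop n)).map (DHmap n)

/-- `H̃(n) = {D_H(f) : f ∈ Λ(n)}`. -/
def HtN : Submodule ℂ (E n) := LinearMap.range (DHmap n)

/-- The degree derivation `𝒞 = ∑ᵢ xᵢ∂ᵢ`. -/
def CC : E n := ∑ i, mulOp n (mono n {i}) * pd n i

/-- The span of the diagonal elements `xᵢ∂ᵢ`. -/
def diagSpan : Submodule ℂ (E n) :=
  Submodule.span ℂ (Set.range fun i : Fin n => mulOp n (mono n {i}) * pd n i)

/-- The four families of Cartan type Lie superalgebras. -/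
inductive CT | W | S | St | H
deriving DecidableEq

/-- Validity of the parameter `n` for each family. -/
def CT.valid : CT → ℕ → Prop
  | .W, n => 4 ≤ n
  | .S, n => 4 ≤ n
  | .St, n => 4 ≤ n ∧ Even n
  | .H, n => 4 < n

/-- The Cartan type Lie superalgebra `L` itself. -/
def CT.algebra : CT → (n : ℕ) → Submodule ℂ (E n)
  | .W, n => Wn n
  | .S, n => Sn n
  | .St, n => Stn n
  | .H, n => Hn n

/-- The extended algebra `L'`: `L' = L` for `W(n)` and `S̃(n)`, `L' = S(n) ⊕ ℂ𝒞` for `S(n)`,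
and `L' = H̃(n) ⊕ ℂ𝒞` for `H(n)`. -/
def CT.prime : CT → (n : ℕ) → Submodule ℂ (E n)
  | .W, n => Wn n
  | .S, n => Sn n ⊔ Submodule.span ℂ {CC n}
  | .St, n => Stn n
  | .H, n => HtN n ⊔ Submodule.span ℂ {CC n}

/-- The top degree `ξ_L` of the ℤ-grading. -/
def CT.xi : CT → (n : ℕ) → ℤ
  | .W, n => (n : ℤ) - 1
  | .S, n => (n : ℤ) - 2
  | .St, n => (n : ℤ) - 2
  | .H, n => (n : ℤ) - 3

/-- The ℤ-grading component `L_j = L ∩ W(n)_j`; for `S̃(n)` the component of degree `−1`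
is `span{(1−x₁⋯x_n)∂ᵢ}` instead. -/
def CT.grade (t : CT) (n : ℕ) (j : ℤ) : Submodule ℂ (E n) :=
  match t with
  | .St =>
      if j = -1 then
        Submodule.span ℂ (Set.range fun i : Fin n => mulOp n (oneM n) * pd n i)
      else Stn n ⊓ edeg n j
  | t => t.algebra n ⊓ edeg n j

/-- The ℤ-grading component `L'_j` of the extended algebra `L'`. -/
def CT.grade' (t : CT) (n : ℕ) (j : ℤ) : Submodule ℂ (E n) :=
  match t with
  | .St => CT.grade .St n j
  | t => t.prime n ⊓ edeg n j

/-- The standard Cartan subalgebra `H_L` of `L`: the part of the diagonal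
`span{xᵢ∂ᵢ}` lying in `L`. -/
def CT.cartan (t : CT) (n : ℕ) : Submodule ℂ (E n) := t.algebra n ⊓ diagSpan n

/-- The weight space of `M ⊆ End Λ(n)` of weight `μ ∈ H_L^*` under the adjoint action
of the standard Cartan subalgebra of `L`. -/
def wtsp (t : CT) (n : ℕ) (M : Submodule ℂ (E n)) (μ : Module.Dual ℂ (t.cartan n)) :
    Submodule ℂ (E n) where
  carrier := {x | x ∈ M ∧ ∀ h : t.cartan n, sbL n h x = μ h • x}
  add_mem' := by
    rintro x y ⟨hx, hx'⟩ ⟨hy, hy'⟩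
    exact ⟨M.add_mem hx hy, fun h => by simp [map_add, hx' h, hy' h, smul_add]⟩
  zero_mem' := ⟨M.zero_mem, fun h => by simp⟩
  smul_mem' := by
    rintro c x ⟨hx, hx'⟩
    exact ⟨M.smul_mem c hx, fun h => by simp [map_smul, hx' h, smul_comm c]⟩

/-- The set of roots of `M` with respect to the standard Cartan subalgebra of `L`:
the nonzero weights with nonzero weight space. -/
def CT.roots (t : CT) (n : ℕ) (M : Submodule ℂ (E n)) : Set (Module.Dual ℂ (t.cartan n)) :=
  {ε | ε ≠ 0 ∧ wtsp t n M ε ≠ ⊥}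

/-- The sign `(−1)^p` for `p ∈ ℤ₂`. -/
def sgn (p : ZMod 2) : ℂ := (-1 : ℂ) ^ p.val

/-- `f` is a super-biderivation of `L` of ℤ₂-degree `pf`:
a bilinear map with `f(L_α, L_β) ⊆ L_{α+β+pf}` satisfying
`f([x,y],z) = (−1)^{|x||f|}[x,f(y,z)] + (−1)^{|y||z|}[f(x,z),y]` and
`f(x,[y,z]) = [f(x,y),z] + (−1)^{(|f|+|x|)|y|}[y,f(x,z)]` for homogeneous `x,y,z ∈ L`.
(The bilinear map is given as a bilinear map on the ambient space `End Λ(n)`;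
only its restriction to `L` is relevant.) -/
structure IsSuperBider (L : Submodule ℂ (E n)) (pf : ZMod 2)
    (f : E n →ₗ[ℂ] E n →ₗ[ℂ] E n) : Prop where
  maps : ∀ (α β : ZMod 2), ∀ x ∈ L ⊓ epar n α, ∀ y ∈ L ⊓ epar n β,
    f x y ∈ L ⊓ epar n (α + β + pf)
  eq1 : ∀ (α β γ : ZMod 2), ∀ x ∈ L ⊓ epar n α, ∀ y ∈ L ⊓ epar n β, ∀ z ∈ L ⊓ epar n γ,
    f (sbL n x y) z = sgn (α * pf) • sbL n x (f y z) + sgn (β * γ) • sbL n (f x z) y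
  eq2 : ∀ (α β γ : ZMod 2), ∀ x ∈ L ⊓ epar n α, ∀ y ∈ L ⊓ epar n β, ∀ z ∈ L ⊓ epar n γ,
    f x (sbL n y z) = sbL n (f x y) z + sgn ((pf + α) * β) • sbL n y (f x z)

/-- `D` is a superderivation of `L` of ℤ₂-degree `p`:
`D(L_α) ⊆ L_{α+p}` and `D([x,y]) = [D(x),y] + (−1)^{|D||x|}[x,D(y)]` for homogeneous
`x, y ∈ L`. (Given as a linear map on the ambient space `End Λ(n)`.) -/
structure IsSuperDer (L : Submodule ℂ (E n)) (p : ZMod 2)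
    (D : E n →ₗ[ℂ] E n) : Prop where
  maps : ∀ (α : ZMod 2), ∀ x ∈ L ⊓ epar n α, D x ∈ L ⊓ epar n (α + p)
  leib : ∀ (α β : ZMod 2), ∀ x ∈ L ⊓ epar n α, ∀ y ∈ L ⊓ epar n β,
    D (sbL n x y) = sbL n (D x) y + sgn (p * α) • sbL n x (D y)

/-- `f ∈ BDer(L)_ε`: the super-biderivation `f` has weight `ε ∈ H_L^*`, i.e.
`f(L_η, L_ζ) ⊆ L_{ε+η+ζ}` for all weights `η, ζ`. -/
def CT.HasWeight (t : CT) (n : ℕ) (f : E n →ₗ[ℂ] E n →ₗ[ℂ] E n)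
    (ε : Module.Dual ℂ (t.cartan n)) : Prop :=
  ∀ (η ζ : Module.Dual ℂ (t.cartan n)),
    ∀ x ∈ wtsp t n (t.algebra n) η, ∀ y ∈ wtsp t n (t.algebra n) ζ,
      f x y ∈ wtsp t n (t.algebra n) (ε + η + ζ)

/-- `f ∈ BDer(L)_i`: the super-biderivation `f` has ℤ-degree `i`, i.e.
`f(L_j, L_k) ⊆ L_{i+j+k}` for all `j, k ∈ ℤ`. -/
def CT.HasDeg (t : CT) (n : ℕ) (f : E n →ₗ[ℂ] E n →ₗ[ℂ] E n) (i : ℤ) : Prop :=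
  ∀ (j k : ℤ), ∀ x ∈ t.grade n j, ∀ y ∈ t.grade n k, f x y ∈ t.grade n (i + j + k)

/-!
The elements `x_i ∂_j` of degree `0` are even, so they act on `End Λ(n)` by honest commutators, and
the canonical relations `∂_k x_i + x_i ∂_k = δ_{ik}`, `∂_j ∂_k + ∂_k ∂_j = 0` give
`[x_i ∂_j, ∂_k] = -δ_{ik} ∂_j`. Thus `L_{-1}` is spanned by `∂_1, …, ∂_n`, on which `L_0` contains
the off-diagonal matrix units, or, for `H(n)`, the generators of the orthogonal Lie algebra. For
`S̃(n)` one replaces `∂_k` by `(1 - x_1⋯x_n) ∂_k`, the factor commuting with `x_i ∂_j` for `i ≠ j`.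
If an invariant subspace contains `∑ c_k ∂_k` with `c_i ≠ 0`, one matrix unit, or two orthogonal
generators, extract from it every `∂_k` with `k ≠ i`; subtracting these leaves `∂_i`.
-/

section Irreducibility

theorem exists_ne_ne_of_card_ne_two {ι : Type*} [Fintype ι] (hι : Fintype.card ι ≠ 2) {i k : ι}
    (hik : i ≠ k) : ∃ j, j ≠ i ∧ j ≠ k := by
  classical
  by_contra! h
  refine hι ?_
  rw [← Finset.card_univ, ← Finset.card_pair hik]
  congr 1
  ext j
  simpa [or_iff_not_imp_left] using h j

variable {K A ι : Type*} [DivisionRing K] [AddCommGroup A] [Module K A]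
  {v : ι → A} {V : Submodule K A}

theorem eq_bot_or_span_range_le [Fintype ι] (hV : V ≤ Submodule.span K (Set.range v))
    (h : ∀ (c : ι → K) (i : ι), c i ≠ 0 → ∑ k, c k • v k ∈ V → ∀ k, k ≠ i → v k ∈ V) :
    V = ⊥ ∨ Submodule.span K (Set.range v) ≤ V := by
  classical
  refine or_iff_not_imp_left.2 fun hbot => ?_
  obtain ⟨x, hx, hx0⟩ := Submodule.exists_mem_ne_zero_of_ne_bot hbot
  obtain ⟨c, rfl⟩ := (Submodule.mem_span_range_iff_exists_fun K).1 (hV hx)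
  obtain ⟨i, -, hi⟩ := Finset.exists_ne_zero_of_sum_ne_zero hx0
  have hci : c i ≠ 0 := left_ne_zero_of_smul hi
  have hne : ∀ k, k ≠ i → v k ∈ V := h c i hci hx
  have hvi : v i ∈ V := by
    rw [← Finset.add_sum_erase _ _ (Finset.mem_univ i)] at hx
    have hrest : ∑ k ∈ Finset.univ.erase i, c k • v k ∈ V :=
      V.sum_mem fun k hk => V.smul_mem _ (hne k (Finset.ne_of_mem_erase hk))
    exact (V.smul_mem_iff hci).1 ((V.add_mem_iff_left hrest).1 hx)
  rw [Submodule.span_le, Set.range_subset_iff]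
  intro k
  obtain rfl | hk := eq_or_ne k i
  exacts [hvi, hne k hk]

variable [DecidableEq ι] {T : ι → ι → Module.End K A}

theorem eq_bot_or_span_range_le_of_gl [Finite ι] (hV : V ≤ Submodule.span K (Set.range v))
    (hT : ∀ i j k, i ≠ j → T i j (v k) = if i = k then -v j else 0)
    (hinv : ∀ i j, i ≠ j → ∀ x ∈ V, T i j x ∈ V) :
    V = ⊥ ∨ Submodule.span K (Set.range v) ≤ V := by
  cases nonempty_fintype ι
  refine eq_bot_or_span_range_le hV fun c i hi hx j hj => ?_
  have hTx : T i j (∑ k, c k • v k) = -(c i • v j) := by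
    simp [hT i j _ hj.symm]
  have hmem := hinv i j hj.symm _ hx
  rw [hTx, V.neg_mem_iff] at hmem
  exact (V.smul_mem_iff hi).1 hmem

theorem eq_bot_or_span_range_le_of_so [Fintype ι] {s : ι → ι} (hs : Function.Involutive s)
    (hι : Fintype.card ι ≠ 2) (hV : V ≤ Submodule.span K (Set.range v))
    (hT : ∀ i j k, T i j (v k) = (if i = k then v (s j) else 0) - if j = k then v (s i) else 0)
    (hinv : ∀ i j, ∀ x ∈ V, T i j x ∈ V) :
    V = ⊥ ∨ Submodule.span K (Set.range v) ≤ V := by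
  refine eq_bot_or_span_range_le hV fun c i hi hx k hki => ?_
  obtain ⟨j, hji, hjk⟩ := exists_ne_ne_of_card_ne_two hι hki.symm
  have hTx : T i j (∑ l, c l • v l) = c i • v (s j) - c j • v (s i) := by
    simp [hT, smul_sub]
  have hTTx : T (s j) (s k) (c i • v (s j) - c j • v (s i)) = c i • v k := by
    simp [hT, hs k, hs.injective.eq_iff, hji, hjk.symm, hki]
  have hmem := hinv (s j) (s k) _ (hinv i j _ hx)
  rw [hTx, hTTx] at hmem
  exact (V.smul_mem_iff hi).1 hmem

end Irreducibility

section Exterior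

variable {n}

/-- The sign `(-1)^#{j ∈ S : j < i}` picked up when `x_i` is moved to its place in `x_S`. -/
def koszulSign (i : Fin n) (S : Finset (Fin n)) : ℂ := msign (S.filter (· < i)).card

theorem msign_mul_self (k : ℕ) : msign k * msign k = 1 := by
  simp [msign, ← mul_pow]

theorem koszulSign_mul_self (i : Fin n) (S : Finset (Fin n)) :
    koszulSign i S * koszulSign i S = 1 :=
  msign_mul_self _

theorem koszulSign_insert {i j : Fin n} {S : Finset (Fin n)} (hj : j ∉ S) :
    koszulSign i (insert j S) = (if j < i then -1 else 1) * koszulSign i S := by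
  unfold koszulSign
  rw [Finset.filter_insert]
  split_ifs
  · rw [Finset.card_insert_of_notMem (by simp [hj]), msign, pow_succ', msign]
  · rw [one_mul]

theorem koszulSign_insert_self (i : Fin n) (S : Finset (Fin n)) :
    koszulSign i (insert i S) = koszulSign i S := by
  simp [koszulSign, Finset.filter_insert]

theorem koszulSign_erase_self (i : Fin n) (S : Finset (Fin n)) :
    koszulSign i (S.erase i) = koszulSign i S := by
  by_cases hi : i ∈ S
  · rw [← koszulSign_insert_self, Finset.insert_erase hi]
  · rw [Finset.erase_eq_of_notMem hi]

theorem koszulSign_insert_mul_swap {i j : Fin n} {S : Finset (Fin n)} (hij : i ≠ j) (hi : i ∉ S)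
    (hj : j ∉ S) :
    koszulSign j (insert i S) * koszulSign i S = -(koszulSign i (insert j S) * koszulSign j S) := by
  rw [koszulSign_insert hi, koszulSign_insert hj]
  rcases hij.lt_or_gt with h | h <;> simp [h, h.not_gt, mul_comm]

theorem koszulSign_insert_mul_insert {i j : Fin n} {S : Finset (Fin n)} (hij : i ≠ j) (hi : i ∉ S)
    (hj : j ∉ S) :
    koszulSign j (insert i S) * koszulSign i (insert j S) = -(koszulSign i S * koszulSign j S) := by
  rw [koszulSign_insert hi, koszulSign_insert hj]
  rcases hij.lt_or_gt with h | h <;> simp [h, h.not_gt, mul_comm]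

theorem mono_eq_single (S : Finset (Fin n)) : mono n S = Pi.single S 1 := by
  funext T
  rw [mono, Pi.single_apply]

theorem pd_apply (i : Fin n) (f : Lambda n) (S : Finset (Fin n)) :
    pd n i f S = if i ∈ S then 0 else koszulSign i S * f (insert i S) := rfl

theorem mulOp_apply (f g : Lambda n) (U : Finset (Fin n)) :
    mulOp n f g U = ∑ S ∈ U.powerset, msign (inversions n S (U \ S)) * f S * g (U \ S) := rfl

theorem mulOp_mono_apply (T : Finset (Fin n)) (g : Lambda n) (U : Finset (Fin n)) :
    mulOp n (mono n T) g U = if T ⊆ U then msign (inversions n T (U \ T)) * g (U \ T) else 0 := by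
  simp [mulOp_apply, mono]

theorem mulOp_mono_empty : mulOp n (mono n ∅) = 1 := by
  refine LinearMap.ext fun f => funext fun U => ?_
  simp [mulOp_mono_apply, inversions, msign]

theorem mulOp_apply_mono_empty (f : Lambda n) : mulOp n f (mono n ∅) = f := by
  funext U
  rw [mulOp_apply, Finset.sum_eq_single_of_mem U (Finset.mem_powerset_self U)]
  · simp [inversions, msign, mono]
  · intro S hS hSU
    have hdiff : U \ S ≠ ∅ := fun h =>
      hSU ((Finset.mem_powerset.1 hS).antisymm (Finset.sdiff_eq_empty_iff_subset.1 h))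
    simp [mono, hdiff]

theorem mulOp_omegaTop_apply (g : Lambda n) (U : Finset (Fin n)) :
    mulOp n (omegaTop n) g U = if U = Finset.univ then g ∅ else 0 := by
  rw [omegaTop, mulOp_mono_apply]
  simp only [Finset.univ_subset_iff]
  split_ifs with h
  · simp [h, inversions, msign]
  · rfl

theorem mulOp_oneM : mulOp n (oneM n) = 1 - mulOp n (omegaTop n) := by
  rw [oneM, map_sub, mulOp_mono_empty]

/-- Left multiplication by the generator `x_i`. -/
def mulX (i : Fin n) : E n := mulOp n (mono n {i})

theorem mulX_apply (i : Fin n) (g : Lambda n) (U : Finset (Fin n)) :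
    mulX i g U = if i ∈ U then koszulSign i U * g (U.erase i) else 0 := by
  rw [mulX, mulOp_mono_apply]
  simp only [Finset.singleton_subset_iff]
  split_ifs with hi
  · have hinv : msign (inversions n {i} (U \ {i})) = koszulSign i (U.erase i) := by
      rw [inversions, Finset.singleton_product, Finset.filter_map, Finset.card_map,
        Finset.sdiff_singleton_eq_erase]
      rfl
    rw [hinv, Finset.sdiff_singleton_eq_erase, koszulSign_erase_self]
  · rfl

theorem mulX_apply_mono_empty (i : Fin n) : mulX i (mono n ∅) = mono n {i} :=
  mulOp_apply_mono_empty _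

theorem pd_apply_mono_empty (i : Fin n) : pd n i (mono n ∅) = 0 := by
  funext S
  simp [pd_apply, mono]

theorem pd_mul_pd_add_pd_mul_pd (i j : Fin n) : pd n i * pd n j + pd n j * pd n i = 0 := by
  refine LinearMap.ext fun f => funext fun S => ?_
  simp only [LinearMap.add_apply, Module.End.mul_apply, Pi.add_apply, LinearMap.zero_apply,
    Pi.zero_apply, pd_apply, Finset.mem_insert]
  obtain rfl | hij := eq_or_ne i j
  · simp
  by_cases hi : i ∈ S
  · simp [hi]
  by_cases hj : j ∈ S
  · simp [hj]
  simp only [hi, hj, hij, hij.symm, or_self, if_false, Finset.insert_comm i j]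
  linear_combination f (insert j (insert i S)) * koszulSign_insert_mul_swap hij hi hj

theorem pd_mul_mulX_add_mulX_mul_pd (i k : Fin n) :
    pd n k * mulX i + mulX i * pd n k = if i = k then 1 else 0 := by
  refine LinearMap.ext fun f => funext fun S => ?_
  simp only [LinearMap.add_apply, Module.End.mul_apply, Pi.add_apply, pd_apply, mulX_apply,
    Finset.mem_insert, Finset.mem_erase]
  obtain rfl | hik := eq_or_ne i k
  · by_cases hi : i ∈ S
    · simp [hi, koszulSign_erase_self, ← mul_assoc, koszulSign_mul_self]
    · simp [hi, koszulSign_insert_self, ← mul_assoc, koszulSign_mul_self]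
  · by_cases hi : i ∈ S
    · by_cases hk : k ∈ S
      · simp [hk, hik, hik.symm]
      obtain ⟨R, hiR, rfl⟩ : ∃ R, i ∉ R ∧ insert i R = S :=
        ⟨S.erase i, S.notMem_erase i, Finset.insert_erase hi⟩
      have hkR : k ∉ R := fun h => hk (Finset.mem_insert_of_mem h)
      rw [Finset.insert_comm, koszulSign_insert_self, koszulSign_insert_self,
        Finset.erase_insert hiR, Finset.erase_insert (by simp [hik, hiR])]
      simp only [Finset.mem_insert, hik.symm, hkR, or_self, ↓reduceIte, hik, true_or, or_true,
        ne_eq, not_false_eq_true, and_false, LinearMap.zero_apply, Pi.zero_apply]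
      linear_combination f (insert k R) * koszulSign_insert_mul_insert hik hiR hkR
    · simp [hi, hik]

theorem pd_apply_mulX (i k : Fin n) (f : Lambda n) :
    pd n k (mulX i f) = (if i = k then f else 0) - mulX i (pd n k f) := by
  have h := LinearMap.congr_fun (pd_mul_mulX_add_mulX_mul_pd i k) f
  rw [eq_sub_iff_add_eq]
  split_ifs at h ⊢ <;> exact h

theorem pd_apply_mono_singleton (i k : Fin n) :
    pd n k (mono n {i}) = if i = k then mono n ∅ else 0 := by
  rw [← mulX_apply_mono_empty, pd_apply_mulX, pd_apply_mono_empty, map_zero, sub_zero]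

end Exterior

section Grading

variable {n}

theorem mono_mem_ldeg (S : Finset (Fin n)) : mono n S ∈ ldeg n S.card := by
  intro T hT
  exact if_neg (by rintro rfl; exact hT rfl)

theorem eq_smul_mono_empty_of_mem_ldeg_zero {f : Lambda n} (hf : f ∈ ldeg n 0) :
    f = f ∅ • mono n ∅ := by
  funext S
  obtain rfl | hS := eq_or_ne S ∅
  · simp [mono]
  · simp [mono, hS, hf S (by simpa using hS)]

theorem mulOp_mem_edeg {f : Lambda n} {d : ℤ} (hf : f ∈ ldeg n d) : mulOp n f ∈ edeg n d := by
  intro m g hg U hU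
  refine Finset.sum_eq_zero fun S hS => ?_
  have hcard : ((U \ S).card : ℤ) + S.card = U.card :=
    mod_cast Finset.card_sdiff_add_card_eq_card (Finset.mem_powerset.1 hS)
  by_cases hSd : (S.card : ℤ) = d
  · rw [hg (U \ S) (by lia), mul_zero]
  · rw [hf S hSd, mul_zero, zero_mul]

theorem pd_mem_edeg (i : Fin n) : pd n i ∈ edeg n (-1) := by
  intro m f hf S hS
  rw [pd_apply]
  split_ifs with hi
  · rfl
  · rw [hf, mul_zero]
    rw [Finset.card_insert_of_notMem hi]
    lia

theorem mul_mem_edeg {D F : E n} {d e : ℤ} (hD : D ∈ edeg n d) (hF : F ∈ edeg n e) :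
    D * F ∈ edeg n (d + e) := by
  intro m f hf
  rw [add_comm d, ← add_assoc]
  exact hD _ _ (hF _ _ hf)

theorem par_apply_of_mem_ldeg {m : ℕ} {f : Lambda n} (hf : f ∈ ldeg n m) :
    par n f = msign m • f := by
  funext S
  change msign S.card * f S = msign m * f S
  by_cases hS : S.card = m
  · rw [hS]
  · rw [hf S (mod_cast hS), mul_zero, mul_zero]

theorem par_mul_par : par n * par n = 1 := by
  refine LinearMap.ext fun f => funext fun S => ?_
  change msign S.card * (msign S.card * f S) = f S
  rw [← mul_assoc, msign_mul_self, one_mul]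

theorem commute_par_of_mem_edeg_zero {D : E n} (hD : D ∈ edeg n 0) : Commute (par n) D := by
  refine (Pi.basisFun ℂ (Finset (Fin n))).ext fun S => ?_
  have hS : D (mono n S) ∈ ldeg n S.card := by
    simpa using hD _ _ (mono_mem_ldeg S)
  simp [← mono_eq_single, par_apply_of_mem_ldeg hS, par_apply_of_mem_ldeg (mono_mem_ldeg S)]

theorem sbL_of_mem_edeg_zero {D : E n} (hD : D ∈ edeg n 0) (F : E n) :
    sbL n D F = D * F - F * D := by
  have hpar : par n * D * par n = D := by
    rw [(commute_par_of_mem_edeg_zero hD).eq, mul_assoc, par_mul_par, mul_one]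
  change sbFun n D F = _
  rw [sbFun, hpar, ← add_mul, add_add_sub_cancel, ← two_smul ℂ F, smul_mul_assoc,
    inv_smul_smul₀ two_ne_zero]

theorem sbL_mul_of_commute {D G : E n} (hD : D ∈ edeg n 0) (hG : Commute D G) (F : E n) :
    sbL n D (G * F) = G * sbL n D F := by
  rw [sbL_of_mem_edeg_zero hD, sbL_of_mem_edeg_zero hD, ← mul_assoc, hG.eq, mul_sub, mul_assoc,
    mul_assoc]

end Grading

section Generators

variable {n}

/-- The element `x_i ∂_j`, acting on `span {∂_k}` as minus a matrix unit of `gl(n)`. -/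
def glUnit (i j : Fin n) : E n := mulX i * pd n j

/-- The element `x_j ∂_{i'} - x_i ∂_{j'}`, which is `D_H(x_i x_j)`; these act on `span {∂_k}` as
generators of the orthogonal Lie algebra preserving the form with `(∂_k, ∂_{k'}) = 1`. -/
def soGen (i j : Fin n) : E n := glUnit j (cidx n i) - glUnit i (cidx n j)

theorem glUnit_mem_edeg_zero (i j : Fin n) : glUnit i j ∈ edeg n 0 :=
  mul_mem_edeg (mulOp_mem_edeg (mono_mem_ldeg {i})) (pd_mem_edeg j)

theorem soGen_mem_edeg_zero (i j : Fin n) : soGen i j ∈ edeg n 0 :=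
  Submodule.sub_mem _ (glUnit_mem_edeg_zero _ _) (glUnit_mem_edeg_zero _ _)

theorem cidx_involutive : Function.Involutive (cidx n) := by
  intro i
  apply Fin.ext
  have := i.isLt
  simp only [cidx]
  split_ifs <;> lia

theorem sbL_glUnit_pd (i j k : Fin n) :
    sbL n (glUnit i j) (pd n k) = if i = k then -pd n j else 0 := by
  calc sbL n (glUnit i j) (pd n k)
      = mulX i * (pd n j * pd n k + pd n k * pd n j)
          - (pd n k * mulX i + mulX i * pd n k) * pd n j := by
        rw [sbL_of_mem_edeg_zero (glUnit_mem_edeg_zero i j), glUnit]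
        noncomm_ring
    _ = if i = k then -pd n j else 0 := by
        rw [pd_mul_pd_add_pd_mul_pd, pd_mul_mulX_add_mulX_mul_pd]
        split_ifs <;> simp

theorem sbL_soGen_pd (i j k : Fin n) :
    sbL n (soGen i j) (pd n k) =
      (if i = k then pd n (cidx n j) else 0) - if j = k then pd n (cidx n i) else 0 := by
  rw [soGen, map_sub, LinearMap.sub_apply, sbL_glUnit_pd, sbL_glUnit_pd]
  split_ifs <;> abel

theorem mulOp_omegaTop_mul_mulX (i : Fin n) : mulOp n (omegaTop n) * mulX i = 0 := by
  refine LinearMap.ext fun f => funext fun U => ?_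
  simp [mulOp_omegaTop_apply, mulX_apply]

theorem glUnit_mul_mulOp_omegaTop {i j : Fin n} (hij : i ≠ j) :
    glUnit i j * mulOp n (omegaTop n) = 0 := by
  refine LinearMap.ext fun f => funext fun U => ?_
  have hne : insert j (U.erase i) ≠ Finset.univ := fun h => by
    simpa [hij] using h.ge (Finset.mem_univ i)
  simp [glUnit, mulX_apply, pd_apply, mulOp_omegaTop_apply, hne]

theorem commute_glUnit_mulOp_oneM {i j : Fin n} (hij : i ≠ j) :
    Commute (glUnit i j) (mulOp n (oneM n)) := by
  have homega : Commute (glUnit i j) (mulOp n (omegaTop n)) := by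
    rw [commute_iff_eq, glUnit_mul_mulOp_omegaTop hij, glUnit, ← mul_assoc,
      mulOp_omegaTop_mul_mulX, zero_mul]
  rw [mulOp_oneM]
  exact (Commute.one_right _).sub_right homega

end Generators

section Membership

variable {n}

theorem Wmap_apply (F : Fin n → Lambda n) : Wmap n F = ∑ i, mulOp n (F i) * pd n i := rfl

theorem Wmap_apply_mono_singleton (F : Fin n → Lambda n) (j : Fin n) :
    Wmap n F (mono n {j}) = F j := by
  simp [Wmap_apply, pd_apply_mono_singleton, apply_ite, mulOp_apply_mono_empty]

theorem Wmap_single (j : Fin n) (f : Lambda n) : Wmap n (Pi.single j f) = mulOp n f * pd n j := by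
  rw [Wmap_apply, Finset.sum_eq_single_of_mem j (Finset.mem_univ j), Pi.single_eq_same]
  intro k _ hk
  rw [Pi.single_eq_of_ne hk, map_zero, zero_mul]

theorem divMap_single (j : Fin n) (f : Lambda n) : divMap n (Pi.single j f) = pd n j f := by
  change ∑ k, pd n k ((Pi.single j f : Fin n → Lambda n) k) = pd n j f
  rw [Finset.sum_eq_single_of_mem j (Finset.mem_univ j), Pi.single_eq_same]
  intro k _ hk
  rw [Pi.single_eq_of_ne hk, map_zero]

theorem Wn_inf_edeg_neg_one_le : Wn n ⊓ edeg n (-1) ≤ Submodule.span ℂ (Set.range (pd n)) := by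
  rintro _ ⟨⟨F, rfl⟩, hF⟩
  have hconst : ∀ j, F j ∈ ldeg n 0 := fun j => by
    simpa [Wmap_apply_mono_singleton] using hF _ _ (mono_mem_ldeg {j})
  rw [Wmap_apply]
  refine Submodule.sum_mem _ fun i _ => ?_
  rw [eq_smul_mono_empty_of_mem_ldeg_zero (hconst i), map_smul, mulOp_mono_empty, smul_mul_assoc,
    one_mul]
  exact Submodule.smul_mem _ _ (Submodule.subset_span ⟨i, rfl⟩)

theorem Sn_le_Wn : Sn n ≤ Wn n := by
  rintro _ ⟨F, _, rfl⟩
  exact ⟨F, rfl⟩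

theorem Hn_le_Wn : Hn n ≤ Wn n := by
  rintro _ ⟨f, _, rfl⟩
  refine ⟨fun i => pd n (cidx n i) (par n f), ?_⟩
  refine Fintype.sum_equiv cidx_involutive.toPerm _ _ fun i => ?_
  simp [cidx_involutive i]

theorem single_mono_mem_divFree {i j : Fin n} (hij : i ≠ j) :
    Pi.single j (mono n {i}) ∈ divFree n := by
  rw [divFree, LinearMap.mem_ker, divMap_single, pd_apply_mono_singleton, if_neg hij]

theorem glUnit_mem_Sn {i j : Fin n} (hij : i ≠ j) : glUnit i j ∈ Sn n :=
  ⟨_, single_mono_mem_divFree hij, Wmap_single j _⟩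

theorem oneMScale_single_mono (i j : Fin n) :
    oneMScale n (Pi.single j (mono n {i})) = Pi.single j (mono n {i}) := by
  have hone : mulOp n (oneM n) (mono n {i}) = mono n {i} := by
    have homega : mulOp n (omegaTop n) (mono n {i}) = 0 := by
      simpa [mulX_apply_mono_empty] using
        LinearMap.congr_fun (mulOp_omegaTop_mul_mulX i) (mono n ∅)
    rw [mulOp_oneM, LinearMap.sub_apply, homega, sub_zero, Module.End.one_apply]
  funext k
  obtain rfl | hk := eq_or_ne k j
  · simp [oneMScale, hone]
  · simp [oneMScale, hk]

theorem glUnit_mem_Stn {i j : Fin n} (hij : i ≠ j) : glUnit i j ∈ Stn n := by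
  refine ⟨_, single_mono_mem_divFree hij, ?_⟩
  rw [LinearMap.comp_apply, oneMScale_single_mono]
  exact Wmap_single j _

theorem DHmap_mulX_mono (i j : Fin n) : DHmap n (mulX i (mono n {j})) = soGen i j := by
  have hpar : par n (mulX i (mono n {j})) = mulX i (mono n {j}) := by
    have hdeg : mulX i (mono n {j}) ∈ ldeg n (2 : ℕ) :=
      mulOp_mem_edeg (mono_mem_ldeg {i}) _ _ (mono_mem_ldeg {j})
    simpa [msign] using par_apply_of_mem_ldeg hdeg
  have hpd (k : Fin n) : pd n k (mulX i (mono n {j})) =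
      (if i = k then mono n {j} else 0) - if j = k then mono n {i} else 0 := by
    rw [pd_apply_mulX, pd_apply_mono_singleton, apply_ite (mulX i), map_zero,
      mulX_apply_mono_empty]
  change ∑ k, mulOp n (pd n k (par n (mulX i (mono n {j})))) * pd n (cidx n k) = _
  simp_rw [hpar, hpd]
  simp [sub_mul, Finset.sum_sub_distrib, apply_ite (mulOp n), ite_mul, soGen, glUnit, mulX]

theorem soGen_mem_Hn (hn : n ≠ 2) (i j : Fin n) : soGen i j ∈ Hn n := by
  refine ⟨mulX i (mono n {j}), ?_, DHmap_mulX_mono i j⟩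
  have hne : Finset.univ.erase i ≠ {j} := fun h => by
    have hcard := congrArg Finset.card h
    rw [Finset.card_erase_of_mem (Finset.mem_univ i), Finset.card_fin,
      Finset.card_singleton] at hcard
    lia
  change mulX i (mono n {j}) Finset.univ = 0
  simp [mulX_apply, mono, hne]

end Membership

/-- The vectors spanning `L_{-1}`: `(1 - x_1⋯x_n) ∂_k` for `S̃(n)` and `∂_k` otherwise. -/
def CT.lowering (t : CT) (n : ℕ) (k : Fin n) : E n :=
  match t with
  | .St => mulOp n (oneM n) * pd n k
  | _ => pd n k

section Lowering

variable {n}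

theorem CT.grade_neg_one_le_span_lowering (t : CT) :
    t.grade n (-1) ≤ Submodule.span ℂ (Set.range (t.lowering n)) := by
  cases t with
  | W => exact Wn_inf_edeg_neg_one_le
  | S => exact (inf_le_inf_right _ Sn_le_Wn).trans Wn_inf_edeg_neg_one_le
  | St => exact le_rfl
  | H => exact (inf_le_inf_right _ Hn_le_Wn).trans Wn_inf_edeg_neg_one_le

theorem CT.glUnit_mem_grade_zero {t : CT} (ht : t ≠ .H) {i j : Fin n} (hij : i ≠ j) :
    glUnit i j ∈ t.grade n 0 := by
  cases t with
  | W => exact ⟨Sn_le_Wn (glUnit_mem_Sn hij), glUnit_mem_edeg_zero i j⟩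
  | S => exact ⟨glUnit_mem_Sn hij, glUnit_mem_edeg_zero i j⟩
  | St => exact ⟨glUnit_mem_Stn hij, glUnit_mem_edeg_zero i j⟩
  | H => exact absurd rfl ht

theorem CT.sbL_glUnit_lowering (t : CT) {i j : Fin n} (hij : i ≠ j) (k : Fin n) :
    sbL n (glUnit i j) (t.lowering n k) = if i = k then -t.lowering n j else 0 := by
  cases t with
  | St =>
    have h := sbL_mul_of_commute (glUnit_mem_edeg_zero i j) (commute_glUnit_mulOp_oneM hij) (pd n k)
    rw [sbL_glUnit_pd] at h
    split_ifs at h ⊢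
    · exact h.trans (mul_neg (mulOp n (oneM n)) (pd n j))
    · exact h.trans (mul_zero _)
  | _ => exact sbL_glUnit_pd i j k

end Lowering

theorem minus_one_irreducible_general (n : ℕ) (t : CT) (ht : t = .H → n ≠ 2)
    (V : Submodule ℂ (E n)) (hV : V ≤ t.grade n (-1))
    (hinv : ∀ x ∈ t.grade n 0, ∀ v ∈ V, sbL n x v ∈ V) :
    V = ⊥ ∨ V = t.grade n (-1) := by
  have hgrade := t.grade_neg_one_le_span_lowering (n := n)
  suffices h : V = ⊥ ∨ Submodule.span ℂ (Set.range (t.lowering n)) ≤ V from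
    h.imp_right fun hspan => hV.antisymm (hgrade.trans hspan)
  obtain rfl | hH := eq_or_ne t .H
  · have hn : n ≠ 2 := ht rfl
    exact eq_bot_or_span_range_le_of_so (T := fun i j => sbL n (soGen i j)) cidx_involutive
      (by rwa [Fintype.card_fin]) (hV.trans hgrade) sbL_soGen_pd
      fun i j => hinv _ ⟨soGen_mem_Hn hn i j, soGen_mem_edeg_zero i j⟩
  · exact eq_bot_or_span_range_le_of_gl (T := fun i j => sbL n (glUnit i j)) (hV.trans hgrade)
      (fun _ _ k hij => t.sbL_glUnit_lowering hij k)
      fun i j hij => hinv _ (CT.glUnit_mem_grade_zero hH hij)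

/-- A Cartan type Lie superalgebra `L` over `ℂ` is irreducible:
`L_{−1}` is an irreducible `L_0`-module under the adjoint action, i.e. the only subspaces
of `L_{−1}` invariant under `[L_0, ·]` are `0` and `L_{−1}`. -/
theorem minus_one_irreducible (n : ℕ) (t : CT) (ht : t.valid n)
    (V : Submodule ℂ (E n)) (hV : V ≤ t.grade n (-1))
    (hinv : ∀ x ∈ t.grade n 0, ∀ v ∈ V, sbL n x v ∈ V) :
    V = ⊥ ∨ V = t.grade n (-1) := by
  refine minus_one_irreducible_general n t ?_ V hV hinv
  rintro rfl rfl
  exact absurd ht (by norm_num [CT.valid])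

end CartanSuper
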